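/- Let (F_0, a) be initial data for the completion problem in ℂ^d, let f : [0,∞) → [0,∞) be strictly convex, and let F = (F_0, G) ∈ C_a(F_0) be a global minimizer of P_f on C_a(F_0). Then there exist a partition {J_1,…,J_p} of {1,…,k} and constants c_1 > c_2 > … > c_p > 0 such that: (1) the subfamilies G_i = {g_j}_{j ∈ J_i} span mutually orthogonal subspaces, so that S_G = ⊕_{i=1}^p S_{G_i}; (2) each frame operator S_{G_i} commutes with S_0; (3) S_F g_j = c_i g_j for every j ∈ J_i and every i ∈ {1,…,p} (i.e., every g_j is an eigenvector of S_F). -/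

import Mathlib

open Finset
open scoped ComplexOrder

noncomputable def sortAsc {m : ℕ} (x : Fin m → ℝ) : Fin m → ℝ :=
  x ∘ Tuple.sort x

noncomputable def sortDesc {m : ℕ} (x : Fin m → ℝ) : Fin m → ℝ :=
  fun i => (x ∘ Tuple.sort x) i.rev

noncomputable def pad {k : ℕ} (x : Fin k → ℝ) (m : ℕ) : Fin m → ℝ :=
  fun i => if h : (i : ℕ) < k then x ⟨i, h⟩ else 0

/-- `MajorizedBy x y` means `x ≺ y`. -/
def MajorizedBy {m : ℕ} (x y : Fin m → ℝ) : Prop :=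
  (∀ j : Fin m, ∑ i ∈ Finset.Iic j, sortDesc x i ≤ ∑ i ∈ Finset.Iic j, sortDesc y i) ∧
    ∑ i, x i = ∑ i, y i

/-- Majorization of vectors of possibly different lengths, padding with zeros. -/
def MajorizedByPad {k m : ℕ} (x : Fin k → ℝ) (y : Fin m → ℝ) : Prop :=
  MajorizedBy (pad x (max k m)) (pad y (max k m))

/-- The frame operator `S_F = ∑ f_i f_i^*` of a finite sequence of vectors in `ℂ^d`. -/
noncomputable def frameOp {d n : ℕ} (F : Fin n → Fin d → ℂ) : Matrix (Fin d) (Fin d) ℂ :=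
  ∑ l, Matrix.vecMulVec (F l) (star (F l))

/-- The squared norm `‖g‖²` of a vector in `ℂ^d`. -/
noncomputable def normSqVec {d : ℕ} (g : Fin d → ℂ) : ℝ :=
  ∑ i, Complex.normSq (g i)

open scoped Classical in
/-- Eigenvalues of a (Hermitian) matrix arranged in decreasing order. -/
noncomputable def eigsDesc {d : ℕ} (S : Matrix (Fin d) (Fin d) ℂ) : Fin d → ℝ :=
  if h : S.IsHermitian then sortDesc h.eigenvalues else 0

open scoped Classical in
/-- Eigenvalues of a (Hermitian) matrix arranged in increasing order. -/
noncomputable def eigsAsc {d : ℕ} (S : Matrix (Fin d) (Fin d) ℂ) : Fin d → ℝ :=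
  if h : S.IsHermitian then sortAsc h.eigenvalues else 0

/-- `Γ_d(a)`: non-increasing nonnegative vectors in `ℝ^d` majorizing `a`. -/
def Gamma {k : ℕ} (d : ℕ) (a : Fin k → ℝ) : Set (Fin d → ℝ) :=
  {μ | Antitone μ ∧ (∀ i, 0 ≤ μ i) ∧ MajorizedByPad a μ}

/-- The convex potential `P_f = tr f(S) = ∑ f(λ_i(S))`. -/
noncomputable def potential {d : ℕ} (f : ℝ → ℝ) (S : Matrix (Fin d) (Fin d) ℂ) : ℝ :=
  ∑ i, f (eigsDesc S i)

/-- Final averages `Q_{j,r} = (1/(r-j)) (∑_{i=j+1}^k a_i + ∑_{i=j+1}^r λ_i)` (1-based). -/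
noncomputable def finalAvg {d k : ℕ} (lam : Fin d → ℝ) (a : Fin k → ℝ) (j r : ℕ) : ℝ :=
  ((∑ i : Fin k, if j ≤ (i : ℕ) then a i else 0) +
      (∑ i : Fin d, if j ≤ (i : ℕ) ∧ (i : ℕ) < r then lam i else 0)) / ((r : ℝ) - (j : ℝ))

/-- Initial averages: `initAvg lam a lo hi = P_{lo+1,hi}` (1-based), i.e. the average of
`h_i = λ_i + a_i` over the (0-based) index window `[lo, hi)`. -/
noncomputable def initAvg {d k : ℕ} (lam : Fin d → ℝ) (a : Fin k → ℝ) (lo hi : ℕ) : ℝ :=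
  ((∑ i : Fin d, if lo ≤ (i : ℕ) ∧ (i : ℕ) < hi then lam i else 0) +
      (∑ i : Fin k, if lo ≤ (i : ℕ) ∧ (i : ℕ) < hi then a i else 0)) / ((hi : ℝ) - (lo : ℝ))

/-- 1-based access to a vector indexed by `Fin d`. -/
noncomputable def get1 {d : ℕ} (lam : Fin d → ℝ) (i : ℕ) : ℝ :=
  if h : i - 1 < d then lam ⟨i - 1, h⟩ else 0

/-- The index `s` is feasible for the pair `(λ, a)`: the unique vector
`ν_s = (c·1_{r-s}, λ_{r+1},…,λ_d)` determined by the truncated data satisfies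
`a^s ≺ ν_s - λ^s`. -/
def FeasibleIdx {d k : ℕ} (lam : Fin d → ℝ) (a : Fin k → ℝ) (s : ℕ) : Prop :=
  ∃ r : ℕ, ∃ c : ℝ, s < r ∧ r ≤ d ∧ 0 < c ∧
    (∀ i : Fin d, s ≤ (i : ℕ) → (i : ℕ) < r → lam i ≤ c) ∧
    (∀ hrd : r < d, c ≤ lam ⟨r, hrd⟩) ∧
    ((r : ℝ) - (s : ℝ)) * c =
      (∑ i : Fin d, if s ≤ (i : ℕ) ∧ (i : ℕ) < r then lam i else 0) +
        (∑ i : Fin k, if s ≤ (i : ℕ) then a i else 0) ∧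
    MajorizedByPad (fun i : Fin (k - s) => a ⟨s + (i : ℕ), by have := i.isLt; omega⟩)
      (fun i : Fin (d - s) =>
        if s + (i : ℕ) < r then c - lam ⟨s + (i : ℕ), by have := i.isLt; omega⟩ else 0)

/-!
Fix an index `l`, let `T` be the sum of `S_0` and the `g_j g_j^*` with `j ≠ l`, and write `g = g_l`.
Replacing `g` by `‖g‖ u`, where `u` is a unit eigenvector for the least eigenvalue `λ` of `T`, moves
that eigenvalue to `y = λ + ‖g‖²` and fixes the others. The spectrum of `T + g g^*` has the same sum
as this competitor, and it interlaces the spectrum of `T`: its values above `y` have been pushed up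
and its values below `y` have been pushed down. Subtracting from `f` a supporting line at `y` leaves
a function that decreases up to `y` and increases after it, so the competitor has the smaller
potential unless the two spectra coincide. By minimality they do coincide, and comparing the traces
of the squares gives `⟪T g, g⟫ = λ ‖g‖²`. Hence `g` is an eigenvector of `T`, and so of `S_F`.

Grouping the `g_l` by eigenvalue of `S_F` makes different groups orthogonal. Each `S_{G_i}` then
commutes with `S_F` and with `S_G`, hence with `S_0 = S_F - S_G`.
-/

open InnerProductSpace Module

section Convexity

lemma lt_of_isMinOn_of_mem_segment {V : Type*} [AddCommGroup V] [Module ℝ V]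
    {s : Set V} {f : V → ℝ} {y t v : V} (hf : StrictConvexOn ℝ s f) (hmin : IsMinOn f s y)
    (hy : y ∈ s) (hv : v ∈ s) (ht : t ∈ segment ℝ y v) (htv : t ≠ v) : f t < f v := by
  have hyv : y ≠ v := by
    rintro rfl
    exact htv (by simpa using ht)
  have hlt : f y < f v := lt_of_le_of_ne (hmin hv) fun h ↦
    hyv (hf.eq_of_isMinOn hmin (fun z hz ↦ h ▸ hmin hz) hy hv)
  rcases eq_or_ne t y with rfl | hty
  · exact hlt
  · have ht' := mem_openSegment_of_ne_left_right hty.symm htv.symm ht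
    exact (hf.lt_on_openSegment hy hv hyv ht').trans_eq (max_eq_right hlt.le)

variable {s : Set ℝ} {f : ℝ → ℝ} {y : ℝ}

lemma exists_isMinOn_sub_mul (hf : ConvexOn ℝ s f) (hy : y ∈ interior s) :
    ∃ c : ℝ, IsMinOn (fun t ↦ f t - c * t) s y := by
  set c := derivWithin f (Set.Ioi y) y
  have hlin : ConcaveOn ℝ s fun t ↦ c * t := (LinearMap.mul ℝ ℝ c).concaveOn hf.1
  refine ⟨c, (hf.sub hlin).isMinOn_of_rightDeriv_eq_zero hy ?_⟩
  have hf' := hf.differentiableWithinAt_Ioi_of_mem_interior hy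
  have hd := hf'.hasDerivWithinAt.sub ((hasDerivWithinAt_id y (Set.Ioi y)).const_mul c)
  simpa [c] using hd.derivWithin (uniqueDiffWithinAt_Ioi y)

lemma strictMonoOn_inter_Ici_of_isMinOn (hf : StrictConvexOn ℝ s f) (hmin : IsMinOn f s y)
    (hy : y ∈ s) : StrictMonoOn f (s ∩ Set.Ici y) := fun t ht v hv htv ↦
  lt_of_isMinOn_of_mem_segment hf hmin hy hv.1
    (by rw [segment_eq_Icc (ht.2.trans htv.le)]; exact ⟨ht.2, htv.le⟩) htv.ne

lemma strictAntiOn_inter_Iic_of_isMinOn (hf : StrictConvexOn ℝ s f) (hmin : IsMinOn f s y)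
    (hy : y ∈ s) : StrictAntiOn f (s ∩ Set.Iic y) := fun v hv t ht hvt ↦
  lt_of_isMinOn_of_mem_segment hf hmin hy hv.1
    (by rw [segment_symm, segment_eq_Icc (hvt.le.trans ht.2)]; exact ⟨hvt.le, ht.2⟩) hvt.ne'

end Convexity

section Interlacing

/-- `nu` interlaces `lam`: in the order of the indices,
`nu 0 ≥ lam 0 ≥ nu 1 ≥ ⋯ ≥ lam (n - 1) ≥ nu n`. It relates the spectra of an operator with and
without a rank-one term. -/
structure Interlaces {n : ℕ} (nu : Fin (n + 1) → ℝ) (lam : Fin n → ℝ) : Prop where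
  le_castSucc (i : Fin n) : lam i ≤ nu i.castSucc
  succ_le (i : Fin n) : nu i.succ ≤ lam i

variable {n : ℕ}

lemma sum_sub_sum_eq_max_min (φ : ℝ → ℝ) (lam : Fin n → ℝ) (nu : Fin (n + 1) → ℝ) (y : ℝ) :
    ∑ i, φ (nu i) - (∑ i, φ (lam i) + φ y) =
      ∑ i, (φ (max (nu i.castSucc) y) - φ (max (lam i) y)) + (φ (max (nu (Fin.last n)) y) - φ y) +
      (∑ i, (φ (min (nu i.succ) y) - φ (min (lam i) y)) + (φ (min (nu 0) y) - φ y)) := by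
  have hnu : ∑ i, φ (nu i) + (n + 1) * φ y =
      (∑ i : Fin n, φ (max (nu i.castSucc) y) + φ (max (nu (Fin.last n)) y)) +
        (φ (min (nu 0) y) + ∑ i : Fin n, φ (min (nu i.succ) y)) := by
    rw [← Fin.sum_univ_castSucc fun i ↦ φ (max (nu i) y),
      ← Fin.sum_univ_succ fun i ↦ φ (min (nu i) y), ← sum_add_distrib]
    simp [fn_max_add_fn_min, sum_add_distrib]
  have hlam : ∑ i, φ (lam i) + n * φ y = ∑ i, φ (max (lam i) y) + ∑ i, φ (min (lam i) y) := by
    rw [← sum_add_distrib]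
    simp [fn_max_add_fn_min, sum_add_distrib]
  simp only [sum_sub_distrib]
  linarith

variable {lam : Fin n → ℝ} {nu : Fin (n + 1) → ℝ} {s : Set ℝ} {f : ℝ → ℝ} {y : ℝ}

lemma max_eq_and_min_eq_of_sum_le (hint : Interlaces nu lam) (hf : StrictConvexOn ℝ s f)
    (hmin : IsMinOn f s y) (hy : y ∈ s) (hnu : ∀ i, nu i ∈ s) (hlam : ∀ i, lam i ∈ s)
    (hsum : ∑ i, f (nu i) ≤ ∑ i, f (lam i) + f y) :
    ((∀ i : Fin n, max (nu i.castSucc) y = max (lam i) y) ∧ max (nu (Fin.last n)) y = y) ∧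
      (∀ i : Fin n, min (nu i.succ) y = min (lam i) y) ∧ min (nu 0) y = y := by
  have hmono := strictMonoOn_inter_Ici_of_isMinOn hf hmin hy
  have hanti := strictAntiOn_inter_Iic_of_isMinOn hf hmin hy
  have hmax {t : ℝ} (ht : t ∈ s) : max t y ∈ s ∩ Set.Ici y :=
    ⟨max_rec' (· ∈ s) ht hy, le_max_right t y⟩
  have hmin' {t : ℝ} (ht : t ∈ s) : min t y ∈ s ∩ Set.Iic y :=
    ⟨min_rec' (· ∈ s) ht hy, min_le_right t y⟩
  have hupper (i : Fin n) : 0 ≤ f (max (nu i.castSucc) y) - f (max (lam i) y) :=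
    sub_nonneg.2 (hmono.monotoneOn (hmax (hlam i)) (hmax (hnu _))
      (max_le_max_right y (hint.le_castSucc i)))
  have hlower (i : Fin n) : 0 ≤ f (min (nu i.succ) y) - f (min (lam i) y) :=
    sub_nonneg.2 (hanti.antitoneOn (hmin' (hnu _)) (hmin' (hlam i))
      (min_le_min_right y (hint.succ_le i)))
  have hlast : 0 ≤ f (max (nu (Fin.last n)) y) - f y := sub_nonneg.2 (hmin (hmax (hnu _)).1)
  have hzero : 0 ≤ f (min (nu 0) y) - f y := sub_nonneg.2 (hmin (hmin' (hnu _)).1)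
  have hsum_upper := sum_nonneg fun i (_ : i ∈ univ) ↦ hupper i
  have hsum_lower := sum_nonneg fun i (_ : i ∈ univ) ↦ hlower i
  have hsplit := sum_sub_sum_eq_max_min f lam nu y
  have hupper_eq := (sum_eq_zero_iff_of_nonneg fun i _ ↦ hupper i).1 (by linarith)
  have hlower_eq := (sum_eq_zero_iff_of_nonneg fun i _ ↦ hlower i).1 (by linarith)
  refine ⟨⟨fun i ↦ ?_, ?_⟩, fun i ↦ ?_, ?_⟩
  · exact hmono.injOn (hmax (hnu _)) (hmax (hlam i)) (sub_eq_zero.1 (hupper_eq i (mem_univ i)))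
  · exact hmono.injOn (hmax (hnu _)) ⟨hy, Set.self_mem_Ici⟩ (by linarith)
  · exact hanti.injOn (hmin' (hnu _)) (hmin' (hlam i)) (sub_eq_zero.1 (hlower_eq i (mem_univ i)))
  · exact hanti.injOn (hmin' (hnu _)) ⟨hy, Set.self_mem_Iic⟩ (by linarith)

lemma sum_comp_eq_of_interlaces (hint : Interlaces nu lam) (hf : StrictConvexOn ℝ s f)
    (hy : y ∈ interior s) (hnu : ∀ i, nu i ∈ s) (hlam : ∀ i, lam i ∈ s)
    (htrace : ∑ i, nu i = ∑ i, lam i + y) (hsum : ∑ i, f (nu i) ≤ ∑ i, f (lam i) + f y)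
    (φ : ℝ → ℝ) : ∑ i, φ (nu i) = ∑ i, φ (lam i) + φ y := by
  obtain ⟨c, hmin⟩ := exists_isMinOn_sub_mul hf.convexOn hy
  have hlin : ConcaveOn ℝ s fun t ↦ c * t := (LinearMap.mul ℝ ℝ c).concaveOn hf.1
  have htilt : ∑ i, (f (nu i) - c * nu i) ≤ ∑ i, (f (lam i) - c * lam i) + (f y - c * y) := by
    simp only [sum_sub_distrib, ← mul_sum, htrace]
    linarith
  obtain ⟨⟨hmax, hlast⟩, hmin', hzero⟩ := max_eq_and_min_eq_of_sum_le hint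
    (hf.sub_concaveOn hlin) hmin (interior_subset hy) hnu hlam htilt
  refine sub_eq_zero.1 ((sum_sub_sum_eq_max_min φ lam nu y).trans ?_)
  simp [hmax, hlast, hmin', hzero]

end Interlacing

section RankOne

variable {𝕜 E : Type*} [RCLike 𝕜] [NormedAddCommGroup E] [InnerProductSpace 𝕜 E]

lemma mul_rankOne (T : E →ₗ[𝕜] E) (x y : E) :
    T * (rankOne 𝕜 x y).toLinearMap = (rankOne 𝕜 (T x) y).toLinearMap :=
  LinearMap.ext fun z ↦ map_smul T (inner 𝕜 y z) x

lemma rankOne_mul_of_isSymmetric {T : E →ₗ[𝕜] E} (hT : T.IsSymmetric) (x y : E) :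
    (rankOne 𝕜 x y).toLinearMap * T = (rankOne 𝕜 x (T y)).toLinearMap :=
  LinearMap.ext fun z ↦ congrArg (· • x) (hT y z).symm

lemma inner_eq_zero_of_apply_eq_smul {S : E →ₗ[𝕜] E} (hS : S.IsSymmetric) {g h : E} {a b : ℝ}
    (hg : S g = (a : 𝕜) • g) (hh : S h = (b : 𝕜) • h) (hab : a ≠ b) : inner 𝕜 g h = 0 := by
  have := hS g h
  rw [hg, hh, inner_smul_left, inner_smul_right, RCLike.conj_ofReal] at this
  exact (mul_eq_mul_right_iff.1 this).resolve_left (RCLike.ofReal_injective.ne hab)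

lemma commute_rankOne_self {S : E →ₗ[𝕜] E} (hS : S.IsSymmetric) {g : E} {a : ℝ}
    (hg : S g = (a : 𝕜) • g) : Commute S (rankOne 𝕜 g g).toLinearMap := by
  rw [commute_iff_eq, mul_rankOne, rankOne_mul_of_isSymmetric hS, hg]
  simp

end RankOne

section Spectrum

variable {𝕜 E : Type*} [RCLike 𝕜] [NormedAddCommGroup E] [InnerProductSpace 𝕜 E]
  [FiniteDimensional 𝕜 E] {n : ℕ} {S T : E →ₗ[𝕜] E}

lemma re_inner_map_self_eq_sum (hT : T.IsSymmetric) (hn : finrank 𝕜 E = n) (x : E) :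
    RCLike.re (inner 𝕜 (T x) x) =
      ∑ i, hT.eigenvalues hn i * ‖inner 𝕜 (hT.eigenvectorBasis hn i) x‖ ^ 2 := by
  rw [← (hT.eigenvectorBasis hn).sum_inner_mul_inner, map_sum]
  refine sum_congr rfl fun i _ ↦ ?_
  rw [hT, hT.apply_eigenvectorBasis, inner_smul_right, mul_assoc, RCLike.re_ofReal_mul,
    inner_mul_symm_re_eq_norm, norm_mul, norm_inner_symm, sq]

lemma mul_norm_sq_le_re_inner_of_inner_eq_zero (hT : T.IsSymmetric) (hn : finrank 𝕜 E = n)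
    {x : E} {j : Fin n} (hx : ∀ l, j < l → inner 𝕜 (hT.eigenvectorBasis hn l) x = 0) :
    hT.eigenvalues hn j * ‖x‖ ^ 2 ≤ RCLike.re (inner 𝕜 (T x) x) := by
  rw [re_inner_map_self_eq_sum hT hn, ← (hT.eigenvectorBasis hn).sum_sq_norm_inner_right,
    mul_sum]
  refine sum_le_sum fun l _ ↦ ?_
  rcases le_or_gt l j with hl | hl
  · exact mul_le_mul_of_nonneg_right (hT.eigenvalues_antitone hn hl) (sq_nonneg _)
  · simp [hx l hl]

lemma re_inner_le_mul_norm_sq_of_inner_eq_zero (hT : T.IsSymmetric) (hn : finrank 𝕜 E = n)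
    {x : E} {i : Fin n} (hx : ∀ l, l < i → inner 𝕜 (hT.eigenvectorBasis hn l) x = 0) :
    RCLike.re (inner 𝕜 (T x) x) ≤ hT.eigenvalues hn i * ‖x‖ ^ 2 := by
  rw [re_inner_map_self_eq_sum hT hn, ← (hT.eigenvectorBasis hn).sum_sq_norm_inner_right,
    mul_sum]
  refine sum_le_sum fun l _ ↦ ?_
  rcases le_or_gt i l with hl | hl
  · exact mul_le_mul_of_nonneg_right (hT.eigenvalues_antitone hn hl) (sq_nonneg _)
  · simp [hx l hl]

lemma eigenvalues_le_eigenvalues_of_re_inner_le (hS : S.IsSymmetric) (hT : T.IsSymmetric)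
    (hn : finrank 𝕜 E = n) {W : Submodule 𝕜 E}
    (hW : ∀ x ∈ W, RCLike.re (inner 𝕜 (S x) x) ≤ RCLike.re (inner 𝕜 (T x) x)) {i j : Fin n}
    (hij : n + i ≤ finrank 𝕜 W + j) : hS.eigenvalues hn j ≤ hT.eigenvalues hn i := by
  let coords : E →ₗ[𝕜] (Finset.Ioi j → 𝕜) × (Finset.Iio i → 𝕜) :=
    (LinearMap.pi fun l : Finset.Ioi j ↦ innerₛₗ 𝕜 (hS.eigenvectorBasis hn l)).prod
      (LinearMap.pi fun l : Finset.Iio i ↦ innerₛₗ 𝕜 (hT.eigenvectorBasis hn l))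
  have hdim : finrank 𝕜 ((Finset.Ioi j → 𝕜) × (Finset.Iio i → 𝕜)) < finrank 𝕜 W := by
    simp only [finrank_prod, finrank_fintype_fun_eq_card, Fintype.card_coe, Fin.card_Ioi,
      Fin.card_Iio]
    omega
  obtain ⟨⟨x, hxW⟩, hx, hx0⟩ := Submodule.exists_mem_ne_zero_of_ne_bot
    ((coords.domRestrict W).ker_ne_bot_of_finrank_lt hdim)
  have hxS (l : Fin n) (hl : j < l) : inner 𝕜 (hS.eigenvectorBasis hn l) x = 0 :=
    congrFun (congrArg Prod.fst hx) ⟨l, mem_Ioi.2 hl⟩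
  have hxT (l : Fin n) (hl : l < i) : inner 𝕜 (hT.eigenvectorBasis hn l) x = 0 :=
    congrFun (congrArg Prod.snd hx) ⟨l, mem_Iio.2 hl⟩
  have hpos : 0 < ‖x‖ ^ 2 := by
    have : x ≠ 0 := fun h ↦ hx0 (Subtype.ext h)
    positivity
  refine le_of_mul_le_mul_right ?_ hpos
  calc hS.eigenvalues hn j * ‖x‖ ^ 2
      ≤ RCLike.re (inner 𝕜 (S x) x) := mul_norm_sq_le_re_inner_of_inner_eq_zero hS hn hxS
    _ ≤ RCLike.re (inner 𝕜 (T x) x) := hW x hxW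
    _ ≤ hT.eigenvalues hn i * ‖x‖ ^ 2 := re_inner_le_mul_norm_sq_of_inner_eq_zero hT hn hxT

lemma interlaces_eigenvalues_add_rankOne (hT : T.IsSymmetric) (hn : finrank 𝕜 E = n + 1) (g : E) :
    Interlaces ((hT.add (isSymmetric_rankOne_self g)).eigenvalues hn)
      fun i ↦ hT.eigenvalues hn i.castSucc where
  le_castSucc i := by
    refine eigenvalues_le_eigenvalues_of_re_inner_le hT _ hn (W := ⊤) (fun x _ ↦ ?_) (by simp [hn])
    rw [LinearMap.add_apply, inner_add_left, map_add]
    exact le_add_of_nonneg_right ((isPositive_rankOne_self g).re_inner_nonneg_left x)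
  succ_le i := by
    refine eigenvalues_le_eigenvalues_of_re_inner_le _ hT hn (W := (𝕜 ∙ g)ᗮ) (fun x hx ↦ ?_) ?_
    · have hgx : rankOne 𝕜 g g x = 0 := by
        rw [rankOne_apply, Submodule.mem_orthogonal_singleton_iff_inner_right.1 hx, zero_smul]
      simp [hgx]
    · have hspan : finrank 𝕜 (𝕜 ∙ g) ≤ 1 := (finrank_span_le_card {g}).trans (by simp)
      have := (𝕜 ∙ g).finrank_add_finrank_orthogonal
      simp only [Fin.val_castSucc, Fin.val_succ]
      omega

lemma apply_eq_smul_of_re_inner_le (hT : T.IsSymmetric) (hn : finrank 𝕜 E = n + 1) {x : E}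
    (hx : RCLike.re (inner 𝕜 (T x) x) ≤ hT.eigenvalues hn (Fin.last n) * ‖x‖ ^ 2) :
    T x = (hT.eigenvalues hn (Fin.last n) : 𝕜) • x := by
  set lam := hT.eigenvalues hn with hlam
  set u := hT.eigenvectorBasis hn with hu
  have hnonneg (l) : 0 ≤ (lam l - lam (Fin.last n)) * ‖inner 𝕜 (u l) x‖ ^ 2 :=
    mul_nonneg (sub_nonneg.2 (hT.eigenvalues_antitone hn (Fin.le_last l))) (sq_nonneg _)
  have hsum : ∑ l, (lam l - lam (Fin.last n)) * ‖inner 𝕜 (u l) x‖ ^ 2 ≤ 0 := by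
    simp only [sub_mul, sum_sub_distrib, ← mul_sum, u.sum_sq_norm_inner_right]
    rw [re_inner_map_self_eq_sum hT hn] at hx
    exact sub_nonpos.2 hx
  have hzero := (sum_eq_zero_iff_of_nonneg fun l _ ↦ hnonneg l).1
    (le_antisymm hsum (sum_nonneg fun l _ ↦ hnonneg l))
  refine InnerProductSpace.ext_inner_left_basis u.toBasis fun l ↦ ?_
  rw [u.coe_toBasis, ← hT, hu, hT.apply_eigenvectorBasis, ← hu, ← hlam, inner_smul_left,
    inner_smul_right, RCLike.conj_ofReal]
  rcases mul_eq_zero.1 (hzero l (mem_univ l)) with hl | hl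
  · rw [sub_eq_zero.1 hl]
  · rw [norm_eq_zero.1 (pow_eq_zero_iff two_ne_zero |>.1 hl), mul_zero, mul_zero]

lemma re_trace_add_rankOne (T : E →ₗ[𝕜] E) (g : E) :
    RCLike.re (LinearMap.trace 𝕜 E (T + rankOne 𝕜 g g)) =
      RCLike.re (LinearMap.trace 𝕜 E T) + ‖g‖ ^ 2 := by
  rw [map_add, trace_rankOne, map_add, inner_self_eq_norm_sq]

lemma re_trace_mul_self_eq_sum (hT : T.IsSymmetric) (hn : finrank 𝕜 E = n) :
    RCLike.re (LinearMap.trace 𝕜 E (T * T)) = ∑ i, hT.eigenvalues hn i ^ 2 := by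
  rw [LinearMap.trace_eq_sum_inner _ (hT.eigenvectorBasis hn), map_sum]
  refine sum_congr rfl fun i _ ↦ ?_
  simp [Module.End.mul_apply, hT.apply_eigenvectorBasis, inner_smul_right, sq]

lemma re_trace_mul_self_add_rankOne (hT : T.IsSymmetric) (g : E) :
    RCLike.re (LinearMap.trace 𝕜 E ((T + rankOne 𝕜 g g) * (T + rankOne 𝕜 g g))) =
      RCLike.re (LinearMap.trace 𝕜 E (T * T)) + 2 * RCLike.re (inner 𝕜 (T g) g) + ‖g‖ ^ 4 := by
  have hgg : RCLike.re (inner 𝕜 g ((inner 𝕜 g g : 𝕜) • g)) = ‖g‖ ^ 4 := by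
    rw [inner_smul_right, inner_self_eq_norm_sq_to_K, ← pow_add, ← RCLike.ofReal_pow,
      RCLike.ofReal_re]
  simp only [add_mul, mul_add, map_add, mul_rankOne, rankOne_mul_of_isSymmetric hT, trace_rankOne,
    ContinuousLinearMap.coe_coe, rankOne_apply, hgg, ← hT g g]
  ring

end Spectrum

section ConvexPotential

variable {𝕜 E : Type*} [RCLike 𝕜] [NormedAddCommGroup E] [InnerProductSpace 𝕜 E]
  [FiniteDimensional 𝕜 E] {n : ℕ} {T : E →ₗ[𝕜] E} {f : ℝ → ℝ} {g : E}

/-- The convex potential `tr f(T)` of an operator with real spectrum: the sum of `f` over the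
eigenvalues of `T`, counted with multiplicity. Reading the eigenvalues off the characteristic
polynomial spares a proof of symmetry as an argument; `RCLike.re` only changes their type when `T`
is symmetric. -/
noncomputable def convexPotential (f : ℝ → ℝ) (T : E →ₗ[𝕜] E) : ℝ :=
  (T.charpoly.roots.map fun z ↦ f (RCLike.re z)).sum

lemma convexPotential_eq_sum_of_basis {ι : Type*} [Fintype ι] (f : ℝ → ℝ) (b : Basis ι 𝕜 E)
    {τ : ι → ℝ} (h : ∀ i, T (b i) = (τ i : 𝕜) • b i) : convexPotential f T = ∑ i, f (τ i) := by
  classical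
  have hdiag : LinearMap.toMatrix b b T = Matrix.diagonal fun i ↦ (τ i : 𝕜) := by
    ext i j
    rcases eq_or_ne i j with rfl | hij
    · simp [LinearMap.toMatrix_apply, h, RCLike.real_smul_eq_coe_mul]
    · simp [LinearMap.toMatrix_apply, h, hij]
  rw [convexPotential, ← LinearMap.charpoly_toMatrix T b, hdiag, Matrix.charpoly_diagonal,
    Polynomial.roots_prod _ _ (by simp [prod_ne_zero_iff, Polynomial.X_sub_C_ne_zero])]
  simp

lemma convexPotential_eq_sum_eigenvalues (f : ℝ → ℝ) (hT : T.IsSymmetric)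
    (hn : finrank 𝕜 E = n) : convexPotential f T = ∑ i, f (hT.eigenvalues hn i) :=
  convexPotential_eq_sum_of_basis f (hT.eigenvectorBasis hn).toBasis fun i ↦ by
    rw [OrthonormalBasis.coe_toBasis, hT.apply_eigenvectorBasis hn i]

lemma convexPotential_add_rankOne_eigenvectorBasis_last (f : ℝ → ℝ) (hT : T.IsSymmetric)
    (hn : finrank 𝕜 E = n + 1) (a : 𝕜) :
    convexPotential f (T + (rankOne 𝕜 (a • hT.eigenvectorBasis hn (Fin.last n))
        (a • hT.eigenvectorBasis hn (Fin.last n))).toLinearMap) =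
      ∑ i : Fin n, f (hT.eigenvalues hn i.castSucc) +
        f (hT.eigenvalues hn (Fin.last n) + ‖a‖ ^ 2) := by
  set u := hT.eigenvectorBasis hn with hu
  rw [convexPotential_eq_sum_of_basis f u.toBasis (τ := Fin.snoc
    (fun i : Fin n ↦ hT.eigenvalues hn i.castSucc) (hT.eigenvalues hn (Fin.last n) + ‖a‖ ^ 2)),
    Fin.sum_univ_castSucc]
  · simp only [Fin.snoc_castSucc, Fin.snoc_last]
  · intro i
    rw [u.coe_toBasis, LinearMap.add_apply, hu, hT.apply_eigenvectorBasis, ← hu,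
      ContinuousLinearMap.coe_coe, rankOne_apply, inner_smul_left]
    induction i using Fin.lastCases with
    | last =>
      rw [u.inner_eq_one, mul_one, smul_smul, RCLike.conj_mul, ← add_smul, Fin.snoc_last,
        RCLike.ofReal_add, RCLike.ofReal_pow]
    | cast i =>
      rw [u.inner_eq_zero (Fin.castSucc_ne_last i).symm, mul_zero, zero_smul, add_zero,
        Fin.snoc_castSucc]

lemma apply_eq_smul_eigenvalues_last_of_forall_convexPotential_le (hT : T.IsPositive)
    (hn : finrank 𝕜 E = n + 1) (hf : StrictConvexOn ℝ (Set.Ici 0) f) (hg : g ≠ 0)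
    (hmin : ∀ g' : E, ‖g'‖ = ‖g‖ → convexPotential f (T + (rankOne 𝕜 g g).toLinearMap) ≤
      convexPotential f (T + (rankOne 𝕜 g' g').toLinearMap)) :
    T g = (hT.isSymmetric.eigenvalues hn (Fin.last n) : 𝕜) • g := by
  have hTg := hT.add (isPositive_rankOne_self g)
  set lam := hT.isSymmetric.eigenvalues hn
  set nu := hTg.isSymmetric.eigenvalues hn
  have hnonneg : ∀ i, 0 ≤ lam i := hT.nonneg_eigenvalues hn
  have hpos : 0 < lam (Fin.last n) + ‖g‖ ^ 2 :=
    add_pos_of_nonneg_of_pos (hnonneg _) (by positivity)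
  have htrace : ∑ i, nu i = ∑ i : Fin n, lam i.castSucc + (lam (Fin.last n) + ‖g‖ ^ 2) := by
    rw [← hTg.isSymmetric.re_trace_eq_sum_eigenvalues hn, re_trace_add_rankOne,
      hT.isSymmetric.re_trace_eq_sum_eigenvalues hn, Fin.sum_univ_castSucc, add_assoc]
  have hpot : ∑ i, f (nu i) ≤ ∑ i : Fin n, f (lam i.castSucc) + f (lam (Fin.last n) + ‖g‖ ^ 2) := by
    have hv := convexPotential_add_rankOne_eigenvectorBasis_last f hT.isSymmetric hn (‖g‖ : 𝕜)
    rw [RCLike.norm_ofReal, abs_norm] at hv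
    rw [← convexPotential_eq_sum_eigenvalues f hTg.isSymmetric hn, ← hv]
    exact hmin _ (by simp [norm_smul])
  have hsq : ∑ i, nu i ^ 2 = ∑ i : Fin n, lam i.castSucc ^ 2 + (lam (Fin.last n) + ‖g‖ ^ 2) ^ 2 :=
    sum_comp_eq_of_interlaces (interlaces_eigenvalues_add_rankOne hT.isSymmetric hn g) hf
      (by rwa [interior_Ici]) (hTg.nonneg_eigenvalues hn) (fun i ↦ hnonneg i.castSucc) htrace
      hpot (· ^ 2)
  have htrace_sq : ∑ i, nu i ^ 2 = ∑ i : Fin n, lam i.castSucc ^ 2 + lam (Fin.last n) ^ 2 +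
      2 * RCLike.re (inner 𝕜 (T g) g) + ‖g‖ ^ 4 := by
    rw [← re_trace_mul_self_eq_sum hTg.isSymmetric hn,
      re_trace_mul_self_add_rankOne hT.isSymmetric, re_trace_mul_self_eq_sum hT.isSymmetric hn,
      Fin.sum_univ_castSucc]
  exact apply_eq_smul_of_re_inner_le hT.isSymmetric hn (by linarith)

lemma exists_pos_add_rankOne_apply_eq_smul (hT : T.IsPositive)
    (hf : StrictConvexOn ℝ (Set.Ici 0) f)
    (hmin : ∀ g' : E, ‖g'‖ = ‖g‖ → convexPotential f (T + (rankOne 𝕜 g g).toLinearMap) ≤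
      convexPotential f (T + (rankOne 𝕜 g' g').toLinearMap)) :
    ∃ c : ℝ, 0 < c ∧ (T + (rankOne 𝕜 g g).toLinearMap) g = (c : 𝕜) • g := by
  rcases eq_or_ne g 0 with rfl | hg
  · exact ⟨1, one_pos, by simp⟩
  have : Nontrivial E := nontrivial_of_ne g 0 hg
  obtain ⟨n, hn⟩ := Nat.exists_eq_succ_of_ne_zero (finrank_pos (R := 𝕜) (M := E)).ne'
  refine ⟨hT.isSymmetric.eigenvalues hn (Fin.last n) + ‖g‖ ^ 2,
    add_pos_of_nonneg_of_pos (hT.nonneg_eigenvalues hn _) (by positivity), ?_⟩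
  rw [LinearMap.add_apply,
    apply_eq_smul_eigenvalues_last_of_forall_convexPotential_le hT hn hf hg hmin,
    ContinuousLinearMap.coe_coe, rankOne_apply, inner_self_eq_norm_sq_to_K, ← add_smul,
    RCLike.ofReal_add, RCLike.ofReal_pow]

end ConvexPotential

lemma exists_strictAnti_partition {ι α : Type*} [Finite ι] [LinearOrder α] (c : ι → α) :
    ∃ (p : ℕ) (J : Fin p → Finset ι) (d : Fin p → α), (∀ i, (J i).Nonempty) ∧
      (∀ l, ∃! i, l ∈ J i) ∧ StrictAnti d ∧ ∀ i l, l ∈ J i ↔ c l = d i := by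
  classical
  cases nonempty_fintype ι
  let d (i : Fin #(univ.image c)) : α := (univ.image c).orderEmbOfFin rfl i.rev
  have hd : StrictAnti d := fun i j hij ↦
    ((univ.image c).orderEmbOfFin rfl).strictMono (Fin.rev_lt_rev.2 hij)
  refine ⟨_, fun i ↦ {l | c l = d i}, d, fun i ↦ ?_, fun l ↦ ?_, hd, fun i l ↦ mem_filter_univ l⟩
  · obtain ⟨l, -, hl⟩ := mem_image.1 ((univ.image c).orderEmbOfFin_mem rfl i.rev)
    exact ⟨l, (mem_filter_univ l).2 hl⟩
  · simp only [mem_filter_univ]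
    obtain ⟨i, hi⟩ : ∃ i, (univ.image c).orderEmbOfFin rfl i = c l := by
      rw [← Set.mem_range, range_orderEmbOfFin]
      simp
    have hdi : d i.rev = c l := by simp only [d, Fin.rev_rev, hi]
    exact ⟨i.rev, hdi.symm, fun j hj ↦ hd.injective (hj.symm.trans hdi.symm)⟩

section Frame

variable {𝕜 E ι : Type*} [RCLike 𝕜] [NormedAddCommGroup E] [InnerProductSpace 𝕜 E]
  {s t : Finset ι} {G G' : ι → E}

variable (𝕜) in
/-- The frame operator `∑ l ∈ s, g_l g_l^*` of the subfamily of `G` indexed by `s`, as a linear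
map. Subfamilies are given by finsets of indices so that the blocks of a partition need no
reindexing. -/
noncomputable def frameOperator (s : Finset ι) (G : ι → E) : E →ₗ[𝕜] E :=
  ∑ l ∈ s, (rankOne 𝕜 (G l) (G l)).toLinearMap

lemma isPositive_frameOperator (s : Finset ι) (G : ι → E) : (frameOperator 𝕜 s G).IsPositive :=
  sum_induction _ LinearMap.IsPositive (fun _ _ ↦ LinearMap.IsPositive.add)
    LinearMap.isPositive_zero fun l _ ↦ isPositive_rankOne_self (G l)

lemma frameOperator_erase_add_rankOne [DecidableEq ι] {l : ι} (hl : l ∈ s) (G : ι → E) :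
    frameOperator 𝕜 (s.erase l) G + (rankOne 𝕜 (G l) (G l)).toLinearMap = frameOperator 𝕜 s G :=
  sum_erase_add s _ hl

lemma frameOperator_congr (h : ∀ l ∈ s, G l = G' l) :
    frameOperator 𝕜 s G = frameOperator 𝕜 s G' :=
  sum_congr rfl fun l hl ↦ by rw [h l hl]

lemma commute_frameOperator {S : E →ₗ[𝕜] E} (hS : S.IsSymmetric) {c : ι → ℝ}
    (hG : ∀ l ∈ s, S (G l) = (c l : 𝕜) • G l) : Commute S (frameOperator 𝕜 s G) :=
  Commute.sum_right _ _ _ fun l hl ↦ commute_rankOne_self hS (hG l hl)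

lemma commute_frameOperator_frameOperator
    (horth : ∀ l ∈ s, ∀ h ∈ t, inner 𝕜 (G l) (G h) = 0) :
    Commute (frameOperator 𝕜 s G) (frameOperator 𝕜 t G) :=
  Commute.sum_left _ _ _ fun l hl ↦ Commute.sum_right _ _ _ fun h hh ↦ by
    rw [commute_iff_eq, mul_rankOne, mul_rankOne]
    simp [horth l hl h hh, inner_eq_zero_symm.1 (horth l hl h hh)]

variable [FiniteDimensional 𝕜 E] [Fintype ι] {f : ℝ → ℝ} {T₀ : E →ₗ[𝕜] E}

lemma exists_pos_apply_eq_smul_of_forall_convexPotential_le (hT₀ : T₀.IsPositive)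
    (hf : StrictConvexOn ℝ (Set.Ici 0) f)
    (hmin : ∀ G' : ι → E, (∀ l, ‖G' l‖ = ‖G l‖) →
      convexPotential f (T₀ + frameOperator 𝕜 univ G) ≤
        convexPotential f (T₀ + frameOperator 𝕜 univ G')) (l : ι) :
    ∃ c : ℝ, 0 < c ∧ (T₀ + frameOperator 𝕜 univ G) (G l) = (c : 𝕜) • G l := by
  classical
  have hisolate (G' : ι → E) : T₀ + frameOperator 𝕜 univ G' =
      T₀ + frameOperator 𝕜 (univ.erase l) G' + (rankOne 𝕜 (G' l) (G' l)).toLinearMap := by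
    rw [add_assoc, frameOperator_erase_add_rankOne (mem_univ l)]
  rw [hisolate]
  refine exists_pos_add_rankOne_apply_eq_smul (hT₀.add (isPositive_frameOperator _ G)) hf
    fun g' hg' ↦ ?_
  have hrest : frameOperator 𝕜 (univ.erase l) (Function.update G l g') =
      frameOperator 𝕜 (univ.erase l) G :=
    frameOperator_congr fun h hh ↦ Function.update_of_ne (ne_of_mem_erase hh) _ _
  have hle := hmin (Function.update G l g') fun h ↦ by
    rcases eq_or_ne h l with rfl | hh
    · rwa [Function.update_self]
    · rw [Function.update_of_ne hh]
  rwa [hisolate, hisolate, hrest, Function.update_self] at hle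

theorem stmt_6_general (hT₀ : T₀.IsPositive) (hf : StrictConvexOn ℝ (Set.Ici 0) f)
    (hmin : ∀ G' : ι → E, (∀ l, ‖G' l‖ = ‖G l‖) →
      convexPotential f (T₀ + frameOperator 𝕜 univ G) ≤
        convexPotential f (T₀ + frameOperator 𝕜 univ G')) :
    ∃ (p : ℕ) (J : Fin p → Finset ι) (c : Fin p → ℝ),
      (∀ i, (J i).Nonempty) ∧ (∀ l, ∃! i, l ∈ J i) ∧ StrictAnti c ∧ (∀ i, 0 < c i) ∧
      (∀ i j, i ≠ j → ∀ l ∈ J i, ∀ h ∈ J j, inner 𝕜 (G l) (G h) = 0) ∧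
      (∀ i, Commute T₀ (frameOperator 𝕜 (J i) G)) ∧
      (∀ i, ∀ l ∈ J i, (T₀ + frameOperator 𝕜 univ G) (G l) = (c i : 𝕜) • G l) := by
  classical
  choose c hc hcG using exists_pos_apply_eq_smul_of_forall_convexPotential_le hT₀ hf hmin
  obtain ⟨p, J, d, hne, hpart, hd, hJ⟩ := exists_strictAnti_partition c
  set S := T₀ + frameOperator 𝕜 univ G with hS
  have hSsymm : S.IsSymmetric := hT₀.isSymmetric.add (isPositive_frameOperator univ G).isSymmetric
  have horth {l h : ι} (hlh : c l ≠ c h) : inner 𝕜 (G l) (G h) = 0 :=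
    inner_eq_zero_of_apply_eq_smul hSsymm (hcG l) (hcG h) hlh
  refine ⟨p, J, d, hne, hpart, hd, fun i ↦ ?_, fun i j hij l hl h hh ↦ horth ?_, fun i ↦ ?_,
    fun i l hl ↦ (hJ i l).1 hl ▸ hcG l⟩
  · obtain ⟨l, hl⟩ := hne i
    exact (hJ i l).1 hl ▸ hc l
  · rw [(hJ i l).1 hl, (hJ j h).1 hh]
    exact hd.injective.ne hij
  · have hcompl : Commute (frameOperator 𝕜 (J i) G) (frameOperator 𝕜 (J i)ᶜ G) :=
      commute_frameOperator_frameOperator fun l hl h hh ↦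
        horth ((hJ i l).1 hl ▸ fun hlh ↦ mem_compl.1 hh ((hJ i h).2 hlh.symm))
    have hsplit : T₀ = S - (frameOperator 𝕜 (J i) G + frameOperator 𝕜 (J i)ᶜ G) := by
      rw [eq_sub_iff_add_eq, hS, frameOperator, frameOperator, sum_add_sum_compl, frameOperator]
    rw [hsplit]
    exact (commute_frameOperator hSsymm fun l _ ↦ hcG l).sub_left
      ((Commute.refl _).add_left hcompl.symm)

end Frame

section EuclideanSpace

variable {𝕜 m ι : Type*} [RCLike 𝕜] [Fintype m]

lemma inner_toLp_toLp_eq_sum (x y : m → 𝕜) :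
    inner 𝕜 (WithLp.toLp 2 x) (WithLp.toLp 2 y) = ∑ i, (starRingEnd 𝕜) (x i) * y i := by
  simp only [PiLp.inner_apply, RCLike.inner_apply']

variable [DecidableEq m]

lemma toEuclideanLin_sum_vecMulVec (s : Finset ι) (G : ι → m → 𝕜) :
    (∑ l ∈ s, Matrix.vecMulVec (G l) (star (G l))).toEuclideanLin =
      frameOperator 𝕜 s fun l ↦ WithLp.toLp 2 (G l) := by
  rw [map_sum, frameOperator]
  refine sum_congr rfl fun l _ ↦ ?_
  rw [← LinearEquiv.eq_symm_apply, symm_toEuclideanLin_rankOne]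

lemma commute_toEuclideanLin_iff {A B : Matrix m m 𝕜} :
    Commute A.toEuclideanLin B.toEuclideanLin ↔ A * B = B * A := by
  rw [commute_iff_eq, Module.End.mul_eq_comp, Module.End.mul_eq_comp, ← Matrix.toLpLin_mul_same,
    ← Matrix.toLpLin_mul_same, (Matrix.toLpLin 2 2).injective.eq_iff]

lemma toEuclideanLin_toLp_eq_smul_iff {A : Matrix m m 𝕜} {x : m → 𝕜} {c : 𝕜} :
    A.toEuclideanLin (WithLp.toLp 2 x) = c • WithLp.toLp 2 x ↔ A.mulVec x = c • x := by
  rw [Matrix.toLpLin_toLp, ← WithLp.toLp_smul, (WithLp.toLp_injective 2).eq_iff,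
    Matrix.toLin'_apply]

variable {d n k : ℕ}

lemma normSqVec_eq_norm_toLp_sq (x : Fin d → ℂ) : normSqVec x = ‖WithLp.toLp 2 x‖ ^ 2 := by
  simp only [normSqVec, EuclideanSpace.norm_sq_eq, Complex.normSq_eq_norm_sq]

lemma toEuclideanLin_frameOp (F : Fin n → Fin d → ℂ) :
    (frameOp F).toEuclideanLin = frameOperator ℂ univ fun l ↦ WithLp.toLp 2 (F l) :=
  toEuclideanLin_sum_vecMulVec univ F

lemma isPositive_toEuclideanLin_frameOp (F : Fin n → Fin d → ℂ) :
    (frameOp F).toEuclideanLin.IsPositive := by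
  rw [toEuclideanLin_frameOp]
  exact isPositive_frameOperator univ _

lemma isHermitian_frameOp (F : Fin n → Fin d → ℂ) : (frameOp F).IsHermitian :=
  Matrix.isSymmetric_toEuclideanLin_iff.1 (isPositive_toEuclideanLin_frameOp F).isSymmetric

lemma potential_eq_convexPotential (f : ℝ → ℝ) {M : Matrix (Fin d) (Fin d) ℂ}
    (hM : M.IsHermitian) : potential f M = convexPotential f M.toEuclideanLin := by
  rw [convexPotential_eq_sum_of_basis f hM.eigenvectorBasis.toBasis (τ := hM.eigenvalues)]
  · simp only [potential, eigsDesc, dif_pos hM, sortDesc]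
    exact (Fin.revPerm.trans (Tuple.sort hM.eigenvalues)).sum_comp fun i ↦ f (hM.eigenvalues i)
  · intro i
    rw [OrthonormalBasis.coe_toBasis]
    exact toEuclideanLin_toLp_eq_smul_iff.2 (hM.mulVec_eigenvectorBasis i)

lemma potential_frameOp_add_frameOp (f : ℝ → ℝ) (F : Fin n → Fin d → ℂ) (G : Fin k → Fin d → ℂ) :
    potential f (frameOp F + frameOp G) = convexPotential f
      ((frameOp F).toEuclideanLin + frameOperator ℂ univ fun l ↦ WithLp.toLp 2 (G l)) := by
  rw [potential_eq_convexPotential f ((isHermitian_frameOp F).add (isHermitian_frameOp G)),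
    map_add, toEuclideanLin_frameOp G]

end EuclideanSpace

theorem stmt_6 {d n₀ k : ℕ} (F₀ : Fin n₀ → Fin d → ℂ) (a : Fin k → ℝ)
    (ha_pos : ∀ i, 0 < a i) (ha_mono : Antitone a)
    (hk : d - (frameOp F₀).rank ≤ k)
    (f : ℝ → ℝ) (hf : StrictConvexOn ℝ (Set.Ici 0) f) (hf0 : ∀ x ∈ Set.Ici (0 : ℝ), 0 ≤ f x)
    (G : Fin k → Fin d → ℂ) (hG : ∀ i, normSqVec (G i) = a i)
    (hmin : ∀ G' : Fin k → Fin d → ℂ, (∀ i, normSqVec (G' i) = a i) →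
      potential f (frameOp F₀ + frameOp G) ≤ potential f (frameOp F₀ + frameOp G')) :
    ∃ (p : ℕ) (J : Fin p → Finset (Fin k)) (c : Fin p → ℝ),
      (∀ i, (J i).Nonempty) ∧
      (∀ l : Fin k, ∃! i : Fin p, l ∈ J i) ∧
      StrictAnti c ∧ (∀ i, 0 < c i) ∧
      (∀ i j : Fin p, i ≠ j → ∀ l ∈ J i, ∀ h ∈ J j,
        ∑ x, (starRingEnd ℂ) (G l x) * G h x = 0) ∧
      (∀ i : Fin p, frameOp F₀ * (∑ l ∈ J i, Matrix.vecMulVec (G l) (star (G l))) =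
        (∑ l ∈ J i, Matrix.vecMulVec (G l) (star (G l))) * frameOp F₀) ∧
      (∀ i : Fin p, ∀ l ∈ J i,
        (frameOp F₀ + frameOp G).mulVec (G l) = (c i : ℂ) • G l) := by
  have hpartition := stmt_6_general (G := fun l ↦ WithLp.toLp 2 (G l))
    (isPositive_toEuclideanLin_frameOp F₀) hf fun G' hG' ↦ by
      simpa only [potential_frameOp_add_frameOp] using hmin (fun l ↦ (G' l).ofLp) fun l ↦ by
        rw [← hG, normSqVec_eq_norm_toLp_sq, normSqVec_eq_norm_toLp_sq, ← hG' l]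
  simpa only [frameOp, ← toEuclideanLin_sum_vecMulVec, ← map_add, inner_toLp_toLp_eq_sum,
    commute_toEuclideanLin_iff, toEuclideanLin_toLp_eq_smul_iff,
    RCLike.ofReal_eq_complex_ofReal] using hpartition
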